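/- arXiv:math/9603216 — 2 statements merged into one kernel-verified Lean document; each statement's English description precedes it below -/
import Mathlib

section
/- For n ≥ 1 define the polynomial function B_n : ℝ → ℝ by B_n(y) := Σ_{j=1}^n 2·(−1)^{j+1}·C(n+j−1, n−j)·((2j−1)!/((j−1)!·(j+1)!))·y^j. Then B_n satisfies the ordinary differential equation y²·(1−y)·B_n''(y) + y·(1−y)·B_n'(y) + (n²·y − 1)·B_n(y) = 0 for all y ∈ ℝ. -/
open Finset

/-- The polynomial function
`B_n(y) = ∑_{j=1}^n 2(-1)^{j+1} C(n+j-1, n-j) (2j-1)!/((j-1)!(j+1)!) y^j`. -/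
noncomputable def koebeB (n : ℕ) (y : ℝ) : ℝ :=
  ∑ j ∈ Icc 1 n, 2 * (-1 : ℝ) ^ (j + 1) * (Nat.choose (n + j - 1) (n - j)) *
    ((Nat.factorial (2 * j - 1) : ℝ) /
      ((Nat.factorial (j - 1) : ℝ) * (Nat.factorial (j + 1) : ℝ))) * y ^ j

/-- The coefficient of `y ^ j` in `koebeB n`. -/
noncomputable def koebeCoeff (n j : ℕ) : ℝ :=
  2 * (-1 : ℝ) ^ (j + 1) * (Nat.choose (n + j - 1) (n - j)) *
    ((Nat.factorial (2 * j - 1) : ℝ) /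
      ((Nat.factorial (j - 1) : ℝ) * (Nat.factorial (j + 1) : ℝ)))

lemma koebeCoeff_rec (n j : ℕ) (hj : 1 ≤ j) (hjn : j + 1 ≤ n) :
    koebeCoeff n (j + 1) * (((j + 1 : ℕ) : ℝ) ^ 2 - 1) +
      koebeCoeff n j * ((n : ℝ) ^ 2 - (j : ℝ) ^ 2) = 0 := by
  obtain ⟨i, rfl⟩ := Nat.exists_eq_add_of_le' hj
  obtain ⟨k, rfl⟩ := Nat.exists_eq_add_of_le' hjn
  unfold koebeCoeff
  have e1 : k + (i + 1 + 1) + (i + 1 + 1) - 1 = k + (2 * i + 3) := by omega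
  have e2 : k + (i + 1 + 1) - (i + 1 + 1) = k := by omega
  have e3 : k + (i + 1 + 1) + (i + 1) - 1 = (k + 1) + (2 * i + 1) := by omega
  have e4 : k + (i + 1 + 1) - (i + 1) = k + 1 := by omega
  have e5 : 2 * (i + 1 + 1) - 1 = 2 * i + 3 := by omega
  have e6 : 2 * (i + 1) - 1 = 2 * i + 1 := by omega
  rw [e1, e2, e3, e4, e5, e6, Nat.cast_add_choose, Nat.cast_add_choose]
  have e7 : k + (2 * i + 3) = (k + 2 * i + 2) + 1 := by omega
  have e8 : k + 1 + (2 * i + 1) = k + 2 * i + 2 := by omega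
  rw [e7, e8]
  simp only [Nat.add_sub_cancel]
  have f1 := Nat.factorial_succ (k + 2 * i + 2)
  rw [f1, Nat.factorial_succ k, Nat.factorial_succ (i + 1 + 1), Nat.factorial_succ i]
  have h1 : ((2 * i + 3).factorial : ℝ) ≠ 0 := by positivity
  have h2 : ((2 * i + 1).factorial : ℝ) ≠ 0 := by positivity
  have h3 : (k.factorial : ℝ) ≠ 0 := by positivity
  have h4 : (i.factorial : ℝ) ≠ 0 := by positivity
  have h5 : ((i + 1 + 1).factorial : ℝ) ≠ 0 := by positivity
  push_cast
  field_simp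
  ring

lemma koebe_partial (n : ℕ) (y : ℝ) (m : ℕ) (hm : 1 ≤ m) : m ≤ n →
    ∑ j ∈ Icc 1 m, koebeCoeff n j *
      (((j : ℝ) ^ 2 - 1) * y ^ j + ((n : ℝ) ^ 2 - (j : ℝ) ^ 2) * y ^ (j + 1)) =
    koebeCoeff n m * ((n : ℝ) ^ 2 - (m : ℝ) ^ 2) * y ^ (m + 1) := by
  induction m, hm using Nat.le_induction with
  | base => intro _; simp; ring
  | succ m hm ih =>
    intro h
    rw [Finset.sum_Icc_succ_top (by omega), ih (by omega)]
    have := koebeCoeff_rec n m hm h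
    linear_combination y ^ (m + 1) * this

/-- For `n ≥ 1`, `B_n` satisfies the ordinary differential equation
`y²(1-y)B_n'' + y(1-y)B_n' + (n²y - 1)B_n = 0`. -/
theorem koebeB_ode (n : ℕ) (hn : 1 ≤ n) (y : ℝ) :
    y ^ 2 * (1 - y) * deriv (deriv (koebeB n)) y +
      y * (1 - y) * deriv (koebeB n) y + ((n : ℝ) ^ 2 * y - 1) * koebeB n y = 0 := by
  have hB : koebeB n = fun y => ∑ j ∈ Icc 1 n, koebeCoeff n j * y ^ j := rfl
  have hd : deriv (koebeB n) =
      fun y => ∑ j ∈ Icc 1 n, koebeCoeff n j * ((j : ℝ) * y ^ (j - 1)) := by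
    funext x
    rw [hB]
    exact (HasDerivAt.fun_sum fun j _ => (hasDerivAt_pow j x).const_mul (koebeCoeff n j)).deriv
  have hdd : deriv (deriv (koebeB n)) y = ∑ j ∈ Icc 1 n,
      koebeCoeff n j * ((j : ℝ) * (((j - 1 : ℕ) : ℝ) * y ^ (j - 1 - 1))) := by
    rw [hd]
    exact (HasDerivAt.fun_sum fun j _ =>
      ((hasDerivAt_pow (j - 1) y).const_mul (j : ℝ)).const_mul (koebeCoeff n j)).deriv
  have hp := koebe_partial n y n hn le_rfl
  rw [sub_self, mul_zero, zero_mul] at hp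
  rw [hdd, hd, hB, ← hp]
  simp only [Finset.mul_sum]
  rw [← Finset.sum_add_distrib, ← Finset.sum_add_distrib]
  refine Finset.sum_congr rfl fun j hj => ?_
  obtain ⟨i, rfl⟩ := Nat.exists_eq_add_of_le' (Finset.mem_Icc.mp hj).1
  rcases i with _ | i
  · simp; ring
  · simp only [Nat.add_sub_cancel]
    push_cast
    ring
end

section
/- (Monotonicity of the de Branges functions; equivalent to the Askey–Gasper inequality and to Weinstein's inequality Λ_k^n(t) ≥ 0.) Let n ≥ 1 and let τ_1, …, τ_{n+1} be a de Branges system of index n. Then for every k with 1 ≤ k ≤ n+1 and every t ≥ 0, one has τ̇_k(t) ≤ 0. -/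
/-- A de Branges system of index `n`: differentiable functions `τ k : ℝ → ℝ`
(`k = 1, …, n+1`) with `τ (n+1) ≡ 0`, `τ k 0 = n+1-k`, and
`τ_{k+1}(t) - τ_k(t) = τ̇_k(t)/k + τ̇_{k+1}(t)/(k+1)` for `k = 1, …, n`. -/
structure IsDeBrangesSystem (n : ℕ) (τ : ℕ → ℝ → ℝ) : Prop where
  differentiable : ∀ k : ℕ, 1 ≤ k → k ≤ n + 1 → Differentiable ℝ (τ k)
  top_eq_zero : ∀ t : ℝ, τ (n + 1) t = 0
  initial : ∀ k : ℕ, 1 ≤ k → k ≤ n + 1 → τ k 0 = (n : ℝ) + 1 - (k : ℝ)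
  system : ∀ k : ℕ, 1 ≤ k → k ≤ n → ∀ t : ℝ,
    τ (k + 1) t - τ k t = deriv (τ k) t / (k : ℝ) + deriv (τ (k + 1)) t / ((k : ℝ) + 1)

open Polynomial

/-- coefficient polynomials of the Chebyshev polynomial `U_n (1 - y + y (q + q⁻¹) / 2)` -/
noncomputable def dbU : ℕ → ℤ → ℝ[X]
  | 0, k => if k = 0 then 1 else 0
  | 1, k => if k = 0 then 2 * (1 - X) else if k = 1 ∨ k = -1 then X else 0
  | n + 2, k => 2 * (1 - X) * dbU (n+1) k + X * (dbU (n+1) (k-1) + dbU (n+1) (k+1)) - dbU n k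

theorem dbU_zero_of_lt (n : ℕ) : ∀ k : ℤ, (n : ℤ) < k.natAbs → dbU n k = 0 := by
  induction n using Nat.strong_induction_on with
  | _ n ih =>
    intro k hk
    match n, ih, hk with
    | 0, ih, hk =>
      have : k ≠ 0 := by rintro rfl; simp at hk
      simp [dbU, this]
    | 1, ih, hk =>
      have h0 : k ≠ 0 := by rintro rfl; simp at hk
      have h1 : k ≠ 1 := by rintro rfl; simp at hk
      have h2 : k ≠ -1 := by rintro rfl; simp at hk
      simp [dbU, h0, h1, h2]
    | n + 2, ih, hk =>
      rw [dbU, ih (n+1) (by omega) k (by omega),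
        ih (n+1) (by omega) (k-1) (by omega),
        ih (n+1) (by omega) (k+1) (by omega), ih n (by omega) k (by omega)]
      ring

theorem dbU_eval_one (n : ℕ) : ∀ k : ℤ,
    (dbU n k).eval 1 = if (k.natAbs : ℤ) ≤ n ∧ (2 : ℤ) ∣ n - k then 1 else 0 := by
  induction n using Nat.strong_induction_on with
  | _ n ih =>
    intro k
    match n, ih with
    | 0, ih =>
      have : ((k.natAbs : ℤ) ≤ ((0 : ℕ) : ℤ) ∧ (2 : ℤ) ∣ ((0 : ℕ) : ℤ) - k) ↔ k = 0 := by omega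
      simp only [this, dbU]
      split_ifs <;> simp
    | 1, ih =>
      have : ((k.natAbs : ℤ) ≤ ((1 : ℕ) : ℤ) ∧ (2 : ℤ) ∣ ((1 : ℕ) : ℤ) - k) ↔ (k = 1 ∨ k = -1) := by omega
      simp only [this, dbU]
      split_ifs <;> simp <;> omega
    | n + 2, ih =>
      simp only [dbU, eval_sub, eval_add, eval_mul, eval_X, eval_one, eval_ofNat]
      rw [ih (n+1) (by omega) k,
        ih (n+1) (by omega) (k-1),
        ih (n+1) (by omega) (k+1), ih n (by omega) k]
      clear ih
      split_ifs <;> first | omega | norm_num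

theorem dbU_pde (n : ℕ) : ∀ k : ℤ,
    -X * (derivative (dbU n k) + derivative (dbU n (k+1)))
      = ((k : ℝ[X]) + 1) * dbU n (k+1) - (k : ℝ[X]) * dbU n k := by
  induction n using Nat.strong_induction_on with
  | _ n ih =>
    intro k
    match n, ih with
    | 0, ih =>
      simp only [dbU]
      by_cases h : k = 0
      · subst h; simp
      · by_cases h' : k + 1 = 0
        · have : k = -1 := by omega
          subst this; simp
        · simp [h, h']
    | 1, ih =>
      simp only [dbU]
      by_cases h0 : k = 0
      · subst h0; simp; ring
      by_cases h1 : k = 1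
      · subst h1; simp
      by_cases h2 : k = -1
      · subst h2; simp; ring
      by_cases h3 : k = -2
      · subst h3; simp; try ring
      simp [h0, h1, h2, show k + 1 ≠ 0 by omega, show k + 1 ≠ -1 by omega]
    | n + 2, ih =>
      have e1 := ih (n+1) (by omega) k
      have e2 := ih (n+1) (by omega) (k-1)
      have e3 := ih (n+1) (by omega) (k+1)
      have e4 := ih n (by omega) k
      simp only [dbU, derivative_mul, derivative_sub, derivative_add, derivative_X,
        derivative_one, derivative_ofNat]
      rw [show k - 1 + 1 = k by ring] at e2
      rw [show k + 1 - 1 = k by ring]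
      push_cast at e2 e3
      linear_combination 2 * (1 - X) * e1 + X * (e2 + e3) - e4

/-- trace of the n-th symmetric power -/
noncomputable def dbTr {R : Type*} [CommRing R] (α β γ δ : R) (n : ℕ) : R :=
  ∑ i ∈ Finset.range (n+1), ((C α * X + C β)^i * (C γ * X + C δ)^(n-i)).coeff i

theorem h_rec {R : Type*} [CommRing R] (P Q : R) (n : ℕ) :
    (∑ i ∈ Finset.range (n+2), P^i * Q^(n+1-i)) = Q * (∑ i ∈ Finset.range (n+1), P^i * Q^(n-i)) + P^(n+1) := by
  rw [Finset.sum_range_succ, Finset.mul_sum]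
  simp only [Nat.sub_self, pow_zero, mul_one]
  congr 1
  apply Finset.sum_congr rfl
  intro i hi
  have : i ≤ n := by simpa [Nat.lt_succ_iff] using hi
  rw [show n + 1 - i = (n - i) + 1 by omega]; ring

theorem h_rec' {R : Type*} [CommRing R] (P Q : R) (n : ℕ) :
    (∑ i ∈ Finset.range (n+2), P^i * Q^(n+1-i)) = P * (∑ i ∈ Finset.range (n+1), P^i * Q^(n-i)) + Q^(n+1) := by
  rw [Finset.sum_range_succ', Finset.mul_sum]
  simp only [Nat.sub_zero, pow_zero, one_mul]
  congr 1
  apply Finset.sum_congr rfl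
  intro i hi
  rw [show n + 1 - (i + 1) = (n - i) by omega]; ring

theorem dbTr_eq {R : Type*} [CommRing R] (α β γ δ : R) (n : ℕ) :
    dbTr α β γ δ n =
      (∑ i ∈ Finset.range (n+1), (C α * X + C β)^i * (X * (C γ * X + C δ))^(n-i)).coeff n := by
  rw [dbTr, finsetSum_coeff]
  apply Finset.sum_congr rfl
  intro i hi
  have : i ≤ n := by simpa [Nat.lt_succ_iff] using hi
  rw [mul_pow, show (C α * X + C β)^i * (X ^(n-i) * (C γ * X + C δ)^(n-i))
    = ((C α * X + C β)^i * (C γ * X + C δ)^(n-i)) * X^(n-i) by ring, coeff_mul_X_pow']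
  rw [if_pos (by omega), show n - (n - i) = i by omega]

theorem dbTr_rec {R : Type*} [CommRing R] (α β γ δ : R) (n : ℕ) :
    dbTr α β γ δ (n+2) = (α + δ) * dbTr α β γ δ (n+1) - (α * δ - β * γ) * dbTr α β γ δ n := by
  simp only [dbTr_eq]
  set P : R[X] := C α * X + C β with hP
  set Q : R[X] := X * (C γ * X + C δ) with hQ
  have h1 := h_rec P Q (n+1)
  have h2 := h_rec' P Q (n+1)
  have h3 := h_rec P Q n
  have h4 := h_rec' P Q n
  simp only [show n + 1 + 2 = n + 3 by ring, show n + 1 + 1 = n + 2 by ring,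
    show n + 2 + 1 = n + 3 by ring] at *
  set H0 := ∑ i ∈ Finset.range (n+1), P^i * Q^(n-i)
  set H1 := ∑ i ∈ Finset.range (n+2), P^i * Q^(n+1-i)
  set H2 := ∑ i ∈ Finset.range (n+3), P^i * Q^(n+2-i)
  have key : H2 = C (α + δ) * (H1 * X) - C (α * δ - β * γ) * (H0 * X^2) + C β * P^(n+1)
      + C γ * (((C γ * X + C δ)^(n+1) * X^(n+1)) * X^2) := by
    have hPQ : P * Q = C δ * X * P + C α * X * Q - C (α * δ - β * γ) * X^2 := by
      simp only [hP, hQ, C_sub, C_mul]; ring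
    have e1 : H2 = P^(n+2) + Q^(n+2) + P * Q * H0 := by
      rw [h1, h4]; ring
    have e2 : (C γ * X + C δ)^(n+1) * X^(n+1) = Q^(n+1) := by rw [hQ, mul_pow]; ring
    rw [e2, e1, hPQ, C_add]
    have hP' : P - C α * X = C β := by rw [hP]; ring
    have hQ' : Q - C δ * X = C γ * X^2 := by rw [hQ]; ring
    linear_combination (-C δ * X) * h4 - C α * X * h3 + P^(n+1) * hP' + Q^(n+1) * hQ'
  rw [key]
  have d1 : (P^(n+1)).coeff (n+2) = 0 := by
    apply coeff_eq_zero_of_natDegree_lt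
    have : P.natDegree ≤ 1 := natDegree_linear_le
    have := natDegree_pow_le_of_le (n+1) this
    omega
  simp only [coeff_add, coeff_sub, coeff_C_mul, d1]
  rw [show n + 2 = (n+1)+1 by ring, coeff_mul_X, show n+1+1 = n+2 by ring, coeff_mul_X_pow,
    coeff_mul_X_pow, coeff_mul_X_pow', if_neg (by omega)]
  ring

/-- matrix entries of the n-th symmetric power of the reflection -/
noncomputable def dbR (a b : ℝ) (n i j : ℕ) : ℝ :=
  ((C a * X + C b)^i * (C b * X - C a)^(n-i)).coeff j

theorem coeff_coeff_swap (p : ℝ[X][X]) (i j : ℕ) :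
    ((Bivariate.swap p).coeff i).coeff j = (p.coeff j).coeff i := by
  induction p using Polynomial.induction_on' with
  | add p q hp hq => simp only [map_add, coeff_add, hp, hq]
  | monomial m f =>
    induction f using Polynomial.induction_on' with
    | add p q hp hq => simp only [map_add, coeff_add, hp, hq]
    | monomial l r =>
      rw [Bivariate.swap_monomial_monomial]
      simp only [coeff_monomial]
      split_ifs <;> simp [coeff_monomial, *]

theorem coeff_lin_pow {R : Type*} [CommRing R] (A B : R) (n i : ℕ) (hi : i ≤ n) :
    ((C A * X + C B)^n).coeff i = n.choose i * (A^i * B^(n-i)) := by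
  rw [add_pow, finsetSum_coeff, Finset.sum_eq_single i]
  · rw [mul_pow, ← C_pow, ← C_pow, show C (A^i) * X^i * C (B^(n-i)) * ((n.choose i : ℕ) : R[X])
      = C (n.choose i * (A^i * B^(n-i))) * X^i by simp; ring, coeff_C_mul_X_pow]
    simp
  · intro m _ hm
    rw [mul_pow, ← C_pow, ← C_pow, show C (A^m) * X^m * C (B^(n-m)) * ((n.choose m : ℕ) : R[X])
      = C (n.choose m * (A^m * B^(n-m))) * X^m by simp; ring, coeff_C_mul_X_pow]
    simp [hm.symm]
  · intro h; simp at h; omega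

theorem dbR_symm (a b : ℝ) (n i j : ℕ) (hi : i ≤ n) (hj : j ≤ n) :
    (n.choose i : ℝ) * dbR a b n i j = n.choose j * dbR a b n j i := by
  set F : ℝ[X][X] := (C (C a * X + C b) * X + C (C b * X - C a))^n with hF
  have h1 : ∀ i j, i ≤ n → (F.coeff i).coeff j = (n.choose i : ℝ) * dbR a b n i j := by
    intro i j hi
    rw [hF, coeff_lin_pow _ _ _ _ hi, dbR, ← C_eq_natCast, coeff_C_mul]
  have h2 : Bivariate.swap F = F := by
    rw [hF]
    simp only [map_pow, map_add, map_mul, map_sub, Bivariate.swap_X, Bivariate.swap_Y,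
      Bivariate.swap_C_C]
    ring
  rw [← h1 i j hi, ← h1 j i hj, ← coeff_coeff_swap, h2]

theorem dbR_mul_nonneg (a b : ℝ) (n i j : ℕ) (hi : i ≤ n) (hj : j ≤ n) :
    0 ≤ dbR a b n i j * dbR a b n j i := by
  have h := dbR_symm a b n i j hi hj
  have hi' : (0 : ℝ) < n.choose i := by exact_mod_cast Nat.choose_pos hi
  have hj' : (0 : ℝ) < n.choose j := by exact_mod_cast Nat.choose_pos hj
  have : dbR a b n i j = (n.choose j / n.choose i : ℝ) * dbR a b n j i := by
    field_simp; linarith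
  rw [this, mul_assoc]
  exact mul_nonneg (by positivity) (mul_self_nonneg _)

/-- homogenised substitution -/
noncomputable def dbHom {S : Type*} [CommRing S] (φ : ℝ →+* S) (n : ℕ) (p : ℝ[X]) (M N : S) : S :=
  ∑ j ∈ Finset.range (n+1), φ (p.coeff j) * (M^j * N^(n-j))

theorem dbHom_mul {S : Type*} [CommRing S] (φ : ℝ →+* S) (n : ℕ) (p : ℝ[X]) (M N : S)
    (hp : p.natDegree ≤ n) (a b : ℝ) :
    dbHom φ (n+1) ((C a * X + C b) * p) M N = (φ a * M + φ b * N) * dbHom φ n p M N := by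
  have h0 : p.coeff (n+1) = 0 := coeff_eq_zero_of_natDegree_lt (by omega)
  have e1 : ∑ j ∈ Finset.range (n+2), φ ((X * p).coeff j) * (M^j * N^(n+1-j))
      = M * dbHom φ n p M N := by
    rw [Finset.sum_range_succ', dbHom, Finset.mul_sum]
    simp only [coeff_X_mul, mul_coeff_zero, coeff_X_zero, zero_mul, map_zero, add_zero]
    apply Finset.sum_congr rfl
    intro j hj
    rw [show n + 1 - (j+1) = n - j by omega]; ring
  have e2 : ∑ j ∈ Finset.range (n+2), φ (p.coeff j) * (M^j * N^(n+1-j))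
      = N * dbHom φ n p M N := by
    rw [Finset.sum_range_succ, dbHom, Finset.mul_sum, h0]
    simp only [map_zero, zero_mul, add_zero]
    apply Finset.sum_congr rfl
    intro j hj
    have : j < n + 1 := by simpa using hj
    rw [show n + 1 - j = n - j + 1 by omega]; ring
  rw [dbHom, add_mul, add_mul, mul_assoc (φ a), mul_assoc (φ b), ← e1, ← e2, Finset.mul_sum,
    Finset.mul_sum, ← Finset.sum_add_distrib]
  apply Finset.sum_congr rfl
  intro j _
  rw [mul_assoc, coeff_add, coeff_C_mul, coeff_C_mul, map_add, map_mul, map_mul]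
  ring

theorem dbHom_pow {S : Type*} [CommRing S] (φ : ℝ →+* S) (M N : S) (a b c d : ℝ) (m i : ℕ) :
    dbHom φ (i + m) ((C a * X + C b)^i * (C c * X + C d)^m) M N
      = (φ a * M + φ b * N)^i * (φ c * M + φ d * N)^m := by
  have hdeg : ∀ (a b : ℝ) (m : ℕ), ((C a * X + C b)^m).natDegree ≤ m := fun a b m => by
    simpa using natDegree_pow_le_of_le m (natDegree_linear_le (a := a) (b := b))
  have h0 : ∀ m : ℕ, dbHom φ m ((C c * X + C d)^m) M N = (φ c * M + φ d * N)^m := by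
    intro m
    induction m with
    | zero => simp [dbHom]
    | succ m ih => rw [pow_succ', dbHom_mul _ _ _ _ _ (hdeg _ _ _), ih, pow_succ']
  induction i with
  | zero => simpa using h0 m
  | succ i ih =>
    rw [pow_succ', mul_assoc, show i + 1 + m = i + m + 1 by ring, dbHom_mul, ih, pow_succ', mul_assoc]
    exact natDegree_mul_le.trans (add_le_add (hdeg _ _ _) (hdeg _ _ _))

open LaurentPolynomial in
theorem dbTr_formula (a b : ℝ) (n : ℕ) :
    dbTr (LaurentPolynomial.C (a*a) + LaurentPolynomial.C (b*b) * T (-1))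
      (LaurentPolynomial.C (a*b) * T 1 - LaurentPolynomial.C (a*b))
      (LaurentPolynomial.C (a*b) - LaurentPolynomial.C (a*b) * T (-1))
      (LaurentPolynomial.C (b*b) * T 1 + LaurentPolynomial.C (a*a)) n
    = ∑ i ∈ Finset.range (n+1), ∑ j ∈ Finset.range (n+1),
      LaurentPolynomial.C (dbR a b n i j * dbR a b n j i) * T ((j : ℤ) - i) := by
  have hT : (T 1 : ℝ[T;T⁻¹]) * T (-1) = 1 := by rw [← T_add]; simp
  rw [dbTr]
  apply Finset.sum_congr rfl
  intro i hi
  have hi : i ≤ n := by simpa [Nat.lt_succ_iff] using hi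
  set φ : ℝ →+* (ℝ[T;T⁻¹])[X] := (Polynomial.C).comp LaurentPolynomial.C with hφ
  set τ : ℝ[X] →+* (ℝ[T;T⁻¹])[X] := mapRingHom LaurentPolynomial.C
  set M : (ℝ[T;T⁻¹])[X] := φ a * X + φ b * Polynomial.C (T 1) with hM
  set N : (ℝ[T;T⁻¹])[X] := φ b * Polynomial.C (T (-1)) * X - φ a with hN
  have hC : (Polynomial.C (T 1) : (ℝ[T;T⁻¹])[X]) * Polynomial.C (T (-1)) = 1 := by
    rw [← C_mul, hT, C_1]
  have key := dbHom_pow φ M N a b b (-a) (n-i) i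
  rw [show i + (n-i) = n by omega] at key
  have l1 : φ a * M + φ b * N = Polynomial.C (LaurentPolynomial.C (a*a) + LaurentPolynomial.C (b*b) * T (-1)) * X
     + Polynomial.C (LaurentPolynomial.C (a*b) * T 1 - LaurentPolynomial.C (a*b)) := by
    simp only [hM, hN, hφ, RingHom.comp_apply, map_mul, map_add, map_sub]; ring
  have l2 : φ b * M + φ (-a) * N = Polynomial.C (LaurentPolynomial.C (a*b) - LaurentPolynomial.C (a*b) * T (-1)) * X
     + Polynomial.C (LaurentPolynomial.C (b*b) * T 1 + LaurentPolynomial.C (a*a)) := by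
    simp only [hM, hN, hφ, RingHom.comp_apply, map_mul, map_add, map_sub, map_neg]; ring
  rw [← l1, ← l2, ← key, dbHom, finsetSum_coeff]
  apply Finset.sum_congr rfl
  intro j hj
  have hj : j ≤ n := by simpa [Nat.lt_succ_iff] using hj
  have m1 : M^j * N^(n-j) = Polynomial.C (T (j : ℤ)) *
     (((Polynomial.C a * X + Polynomial.C b)^j * (Polynomial.C b * X - Polynomial.C a)^(n-j)).map
       (LaurentPolynomial.C : ℝ →+* ℝ[T;T⁻¹])).comp (Polynomial.C (T (-1)) * X) := by
    have hM' : M = Polynomial.C (T 1) * ((Polynomial.C a * X + Polynomial.C b).map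
       (LaurentPolynomial.C : ℝ →+* ℝ[T;T⁻¹])).comp (Polynomial.C (T (-1)) * X) := by
      simp [hM, hφ]
      linear_combination (-Polynomial.C (LaurentPolynomial.C a) * X) * hC
    have hN' : N = ((Polynomial.C b * X - Polynomial.C a).map
       (LaurentPolynomial.C : ℝ →+* ℝ[T;T⁻¹])).comp (Polynomial.C (T (-1)) * X) := by
      simp [hN, hφ]
      ring
    rw [Polynomial.map_mul, Polynomial.map_pow, Polynomial.map_pow, mul_comp, pow_comp, pow_comp,
      ← hN', hM', mul_pow, ← C_pow, T_pow]
    simp only [mul_one]; ring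
  rw [m1, hφ, RingHom.comp_apply, coeff_C_mul, coeff_C_mul, comp_C_mul_X_coeff, coeff_map, T_pow,
    map_mul, sub_eq_add_neg (j : ℤ), T_add]
  rw [show (Polynomial.C b * X + Polynomial.C (-a)) = Polynomial.C b * X - Polynomial.C a by
    rw [C_neg]; ring]
  simp only [dbR, mul_neg, mul_one]
  ring

open LaurentPolynomial in
theorem dbTr_coeff (a b : ℝ) (hab : a*a + b*b = 1) (n : ℕ) : ∀ k : ℤ, AddMonoidAlgebra.coeff
    (dbTr (LaurentPolynomial.C (a*a) + LaurentPolynomial.C (b*b) * T (-1))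
      (LaurentPolynomial.C (a*b) * T 1 - LaurentPolynomial.C (a*b))
      (LaurentPolynomial.C (a*b) - LaurentPolynomial.C (a*b) * T (-1))
      (LaurentPolynomial.C (b*b) * T 1 + LaurentPolynomial.C (a*a)) n) k = (dbU n k).eval (b*b) := by
  have hT : (T 1 : ℝ[T;T⁻¹]) * T (-1) = 1 := by rw [← T_add]; simp
  have ha : a * a = 1 - b * b := by linarith
  induction n using Nat.strong_induction_on with
  | _ n ih =>
    intro k
    match n, ih with
    | 0, ih =>
      have : dbTr (LaurentPolynomial.C (a*a) + LaurentPolynomial.C (b*b) * T (-1))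
        (LaurentPolynomial.C (a*b) * T 1 - LaurentPolynomial.C (a*b))
        (LaurentPolynomial.C (a*b) - LaurentPolynomial.C (a*b) * T (-1))
        (LaurentPolynomial.C (b*b) * T 1 + LaurentPolynomial.C (a*a)) 0
        = (AddMonoidAlgebra.single 0 1 : ℝ[T;T⁻¹]) := by
        simp [dbTr, single_zero_one_eq_one]
      rw [this, AddMonoidAlgebra.coeff_single, Finsupp.single_apply, dbU]
      by_cases h : k = 0
      · simp [h]
      · simp [h, Ne.symm h]
    | 1, ih =>
      have : dbTr (LaurentPolynomial.C (a*a) + LaurentPolynomial.C (b*b) * T (-1))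
        (LaurentPolynomial.C (a*b) * T 1 - LaurentPolynomial.C (a*b))
        (LaurentPolynomial.C (a*b) - LaurentPolynomial.C (a*b) * T (-1))
        (LaurentPolynomial.C (b*b) * T 1 + LaurentPolynomial.C (a*a)) 1
        = (AddMonoidAlgebra.single 0 (a*a + a*a) + AddMonoidAlgebra.single (-1) (b*b)
          + AddMonoidAlgebra.single 1 (b*b) : ℝ[T;T⁻¹]) := by
        rw [single_eq_C_mul_T, single_eq_C_mul_T, single_eq_C_mul_T]
        simp [dbTr, Finset.sum_range_succ, -map_mul]; ring
      rw [this, AddMonoidAlgebra.coeff_add, AddMonoidAlgebra.coeff_add, Finsupp.add_apply,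
        Finsupp.add_apply, AddMonoidAlgebra.coeff_single, AddMonoidAlgebra.coeff_single,
        AddMonoidAlgebra.coeff_single,
        Finsupp.single_apply, Finsupp.single_apply, Finsupp.single_apply, dbU, ha]
      by_cases h : k = 0
      · subst h; simp; ring
      by_cases h1 : k = 1
      · subst h1; simp
      by_cases h2 : k = -1
      · subst h2; simp
      simp [h, h1, h2, Ne.symm h, Ne.symm h1, Ne.symm h2]
    | n + 2, ih =>
      rw [dbTr_rec]
      have hdet : (LaurentPolynomial.C (a*a) + LaurentPolynomial.C (b*b) * T (-1)) * (LaurentPolynomial.C (b*b) * T 1 + LaurentPolynomial.C (a*a))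
        - (LaurentPolynomial.C (a*b) * T 1 - LaurentPolynomial.C (a*b)) * (LaurentPolynomial.C (a*b) - LaurentPolynomial.C (a*b) * T (-1)) = (1 : ℝ[T;T⁻¹]) := by
        have : (LaurentPolynomial.C a * LaurentPolynomial.C a + LaurentPolynomial.C b * LaurentPolynomial.C b : ℝ[T;T⁻¹]) = 1 := by
          rw [← map_mul, ← map_mul, ← map_add, hab, map_one]
        simp only [map_mul]
        generalize LaurentPolynomial.C a = A at *
        generalize LaurentPolynomial.C b = B at *
        linear_combination (B^4 + A^2*B^2) * hT + (A^2 + B^2 + 1) * this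
      rw [hdet, one_mul]
      have i1 := ih (n+1) (by omega)
      have i2 := ih n (by omega)
      generalize dbTr (R := ℝ[T;T⁻¹]) _ _ _ _ (n+1) = V1 at *
      generalize dbTr (R := ℝ[T;T⁻¹]) _ _ _ _ n = V0 at *
      rw [show (LaurentPolynomial.C (a * a) + LaurentPolynomial.C (b * b) * T (-1) + (LaurentPolynomial.C (b * b) * T 1 + LaurentPolynomial.C (a * a))) * V1
        = AddMonoidAlgebra.single 0 (a*a + a*a) * V1 + AddMonoidAlgebra.single (-1) (b*b) * V1 + AddMonoidAlgebra.single 1 (b*b) * V1 by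
         rw [single_eq_C_mul_T, single_eq_C_mul_T, single_eq_C_mul_T]; simp; ring]
      rw [AddMonoidAlgebra.coeff_sub, AddMonoidAlgebra.coeff_add, AddMonoidAlgebra.coeff_add,
        Finsupp.sub_apply, Finsupp.add_apply, Finsupp.add_apply,
        AddMonoidAlgebra.coeff_single_mul_apply, AddMonoidAlgebra.coeff_single_mul_apply,
        AddMonoidAlgebra.coeff_single_mul_apply, i1, i1, i1, i2]
      simp only [dbU, eval_sub, eval_add, eval_mul, eval_X, eval_one, eval_ofNat]
      rw [ha, show -0 + k = k by ring, show - -1 + k = k + 1 by ring,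
        show -1 + k = k - 1 by ring]
      ring

theorem dbU_nonneg (n : ℕ) (k : ℤ) (y : ℝ) (h0 : 0 ≤ y) (h1 : y ≤ 1) : 0 ≤ (dbU n k).eval y := by
  have hb : √y * √y = y := Real.mul_self_sqrt h0
  have ha : √(1 - y) * √(1 - y) = 1 - y := Real.mul_self_sqrt (by linarith)
  have h := dbTr_coeff (√(1 - y)) (√y) (by rw [ha, hb]; ring) n k
  rw [dbTr_formula, hb] at h
  rw [← h, AddMonoidAlgebra.coeff_sum, Finsupp.finsetSum_apply]
  apply Finset.sum_nonneg
  intro i hi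
  rw [AddMonoidAlgebra.coeff_sum, Finsupp.finsetSum_apply]
  apply Finset.sum_nonneg
  intro j hj
  rw [← LaurentPolynomial.single_eq_C_mul_T, AddMonoidAlgebra.coeff_single, Finsupp.single_apply]
  split_ifs
  · exact dbR_mul_nonneg _ _ _ _ _ (by simpa [Nat.lt_succ_iff] using hi)
      (by simpa [Nat.lt_succ_iff] using hj)
  · exact le_rfl

theorem dbU_hasDerivAt (p : ℝ[X]) (t : ℝ) :
    HasDerivAt (fun t => p.eval (Real.exp (-t)))
      ((-X * derivative p).eval (Real.exp (-t))) t := by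
  have h1 : HasDerivAt (fun t : ℝ => Real.exp (-t)) (Real.exp (-t) * (-1)) t :=
    (hasDerivAt_neg t).exp
  have h2 := (p.hasDerivAt (Real.exp (-t))).comp t h1
  refine h2.congr_deriv ?_
  simp only [eval_mul, eval_neg, eval_X]; ring

theorem deBranges_deriv_eq (n : ℕ) (τ : ℕ → ℝ → ℝ) (hτ : IsDeBrangesSystem n τ) (d : ℕ) :
    ∀ k : ℕ, 1 ≤ k → k + d = n + 1 → ∀ t : ℝ,
      deriv (τ k) t = -k * (dbU n k).eval (Real.exp (-t)) := by
  induction d with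
  | zero =>
    intro k hk hkn t
    have : k = n + 1 := by omega
    subst this
    rw [show τ (n+1) = fun _ => 0 from funext hτ.top_eq_zero, dbU_zero_of_lt _ _ (by omega)]
    simp
  | succ d ih =>
    intro k hk hkn
    have ih' := ih (k+1) (by omega) (by omega)
    push_cast at ih'
    have hk0 : (k : ℝ) ≠ 0 := by positivity
    have hk1 : (k : ℝ) + 1 ≠ 0 := by positivity
    set s0 : ℝ → ℝ := fun t => (dbU n k).eval (Real.exp (-t)) with hs0
    set s1 : ℝ → ℝ := fun t => (dbU n (k+1)).eval (Real.exp (-t)) with hs1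
    have hsys : ∀ t, deriv (τ k) t = k * (τ (k+1) t - τ k t + s1 t) := by
      intro t
      have := hτ.system k hk (by omega) t
      rw [ih' t] at this
      simp only [hs1]
      field_simp at this
      linarith
    set g : ℝ → ℝ := fun t => τ (k+1) t - τ k t + s1 t + s0 t with hg
    have hgd : ∀ t, HasDerivAt g (-k * g t) t := by
      intro t
      have d0 := (hτ.differentiable k hk (by omega) t).hasDerivAt
      have d1 := (hτ.differentiable (k+1) (by omega) (by omega) t).hasDerivAt
      have d2 := dbU_hasDerivAt (dbU n k) t
      have d3 := dbU_hasDerivAt (dbU n (k+1)) t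
      have h := ((d1.sub d0).add d3).add d2
      refine h.congr_deriv ?_
      have hp := congrArg (eval (Real.exp (-t))) (dbU_pde n k)
      simp only [eval_mul, eval_add, eval_sub, eval_neg, eval_X, eval_one, eval_intCast,
        Int.cast_natCast, eval_natCast] at hp ⊢
      rw [hsys t, ih' t]
      simp only [hg, hs0, hs1]
      linarith
    have hg0 : g 0 = 0 := by
      simp only [hg, hs0, hs1, neg_zero, Real.exp_zero, dbU_eval_one]
      rw [hτ.initial k hk (by omega), hτ.initial (k+1) (by omega) (by omega)]
      rw [Nat.cast_add, Nat.cast_one]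
      split_ifs <;> first | omega | ring
    have hconst : ∀ t, g t * Real.exp (k * t) = g 0 * Real.exp (k * 0) := by
      intro t
      refine is_const_of_deriv_eq_zero (f := fun t => g t * Real.exp (k * t)) ?_ ?_ t 0
      · intro x
        exact ((hgd x).mul ((hasDerivAt_id x).const_mul (k : ℝ)).exp).differentiableAt
      · intro x
        refine ((hgd x).mul ((hasDerivAt_id x).const_mul (k : ℝ)).exp).deriv.trans ?_
        simp; ring
    intro t
    have h1 := hconst t
    rw [hg0, zero_mul] at h1
    have h2 : g t = 0 := by
      rcases mul_eq_zero.1 h1 with h | h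
      · exact h
      · exact absurd h (Real.exp_ne_zero _)
    rw [hsys t]
    simp only [hg, hs0] at h2
    linear_combination (k : ℝ) * h2

/-- Monotonicity of the de Branges functions: they are nonincreasing on `[0, ∞)`: `τ̇_k(t) ≤ 0` (equivalent to the Askey--Gasper inequality and to Weinstein's inequality `Λ_k^n(t) ≥ 0`). -/
theorem deBranges_deriv_nonpos (n : ℕ) (hn : 1 ≤ n) (τ : ℕ → ℝ → ℝ)
    (hτ : IsDeBrangesSystem n τ) :
    ∀ k : ℕ, 1 ≤ k → k ≤ n + 1 → ∀ t : ℝ, 0 ≤ t → deriv (τ k) t ≤ 0 := by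
  intro k hk hkn t ht
  rw [deBranges_deriv_eq n τ hτ (n + 1 - k) k hk (by omega) t]
  have := dbU_nonneg n k (Real.exp (-t)) (Real.exp_pos _).le (by simpa using ht)
  have hk0 : (0 : ℝ) ≤ k := by positivity
  nlinarith [mul_nonneg hk0 this]
end
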